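/- arXiv:2411.14112 — 5 statements merged into one kernel-verified Lean document; each statement's English description precedes it below -/
import Mathlib

section
/- Let n ≥ 4 and let k be an integer with 2 ≤ k ≤ ⌊n/2⌋. Then α(n,k,0,1) ≥ b(n,k,0), and equality holds if and only if n = 2k. -/
noncomputable def alphaF (n k : ℕ) (H c : ℝ) : ℝ :=
  ((n : ℝ) - 1 -
      (k : ℝ) * ((n : ℝ) - (k : ℝ)) * ((n : ℝ) - 2) /
        ((k : ℝ) * ((n : ℝ) - 2 * (k : ℝ)) + (n : ℝ) * ((k : ℝ) - 1) * ((n : ℝ) - (k : ℝ)))) *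
    (c + H ^ 2)

noncomputable def bF (n k : ℕ) (H : ℝ) : ℝ :=
  (n : ℝ) * ((k : ℝ) - 1) / (k : ℝ) +
    (n : ℝ) * ((k : ℝ) - 1) * H / (2 * (k : ℝ) ^ 2) *
      ((n : ℝ) * H + Real.sqrt ((n : ℝ) ^ 2 * H ^ 2 + 4 * (k : ℝ) * ((n : ℝ) - (k : ℝ))))

/-!
At `H = 0`, `c = 1` the difference `α - b` is a rational function of `n` and `k` that factors as
`(n - 2k)` times a quotient whose numerator `n (k - 1) (n - k)` is visibly positive for
`1 < k < n`. Its denominator is `k` times that of `α`, and the latter is positive as well, being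
`k² (n - k - 1) + (n - k)² (k - 1)`. So `α - b` has the sign of `n - 2k` on the whole range
`2 ≤ k < n`.
-/

/-- The denominator of the fraction in `alphaF`, as a polynomial in real arguments; its sign governs
that of `alphaF n k 0 1 - bF n k 0`. -/
def alphaDenom (n k : ℝ) : ℝ :=
  k * (n - 2 * k) + n * (k - 1) * (n - k)

theorem alphaDenom_eq_sq_mul_add_sq_mul (n k : ℝ) :
    alphaDenom n k = k ^ 2 * (n - k - 1) + (n - k) ^ 2 * (k - 1) := by
  unfold alphaDenom
  ring

theorem alphaDenom_pos {n k : ℝ} (hk : 1 < k) (hkn : k + 1 ≤ n) : 0 < alphaDenom n k := by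
  have hk₁ : 0 < k - 1 := by linarith
  have hnk : 0 < n - k := by linarith
  have hnk₁ : 0 ≤ n - k - 1 := by linarith
  rw [alphaDenom_eq_sq_mul_add_sq_mul]
  exact add_pos_of_nonneg_of_pos (mul_nonneg (sq_nonneg k) hnk₁) (mul_pos (pow_pos hnk 2) hk₁)

theorem alphaF_zero_one (n k : ℕ) :
    alphaF n k 0 1 = n - 1 - k * (n - k) * (n - 2) / alphaDenom n k := by
  simp [alphaF, alphaDenom]

theorem bF_zero (n k : ℕ) : bF n k 0 = n * (k - 1) / k := by
  simp [bF]

theorem alphaF_sub_bF {n k : ℕ} (hk : k ≠ 0) (hD : alphaDenom n k ≠ 0) :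
    alphaF n k 0 1 - bF n k 0 =
      n * (k - 1) * (n - k) / (k * alphaDenom n k) * (n - 2 * k) := by
  have hk₀ : (k : ℝ) ≠ 0 := Nat.cast_ne_zero.mpr hk
  rw [alphaF_zero_one, bF_zero]
  field_simp
  unfold alphaDenom
  ring

theorem exists_pos_alphaF_sub_bF_eq_mul {n k : ℕ} (hk : 2 ≤ k) (hkn : k < n) :
    ∃ q : ℝ, 0 < q ∧ alphaF n k 0 1 - bF n k 0 = q * (n - 2 * k) := by
  have hk₁ : (1 : ℝ) < k := by exact_mod_cast hk
  have hkn₁ : (k : ℝ) + 1 ≤ n := by exact_mod_cast hkn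
  have hD : 0 < alphaDenom n k := alphaDenom_pos hk₁ hkn₁
  refine ⟨_, ?_, alphaF_sub_bF (by omega) hD.ne'⟩
  have hk_sub : (0 : ℝ) < k - 1 := by linarith
  have hn_sub : (0 : ℝ) < n - k := by linarith
  have hk_pos : (0 : ℝ) < k := by linarith
  have hn_pos : (0 : ℝ) < n := by linarith
  exact div_pos (mul_pos (mul_pos hn_pos hk_sub) hn_sub) (mul_pos hk_pos hD)

theorem stmt_1_general (n k : ℕ) (hk : 2 ≤ k) (hkn : k < n) :
    (alphaF n k 0 1 ≥ bF n k 0 ↔ 2 * k ≤ n) ∧ (alphaF n k 0 1 = bF n k 0 ↔ n = 2 * k) := by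
  obtain ⟨q, hq, hsub⟩ := exists_pos_alphaF_sub_bF_eq_mul hk hkn
  constructor
  · rw [ge_iff_le, ← sub_nonneg, hsub, mul_nonneg_iff_of_pos_left hq, sub_nonneg]
    norm_cast
  · rw [← sub_eq_zero, hsub, mul_eq_zero, or_iff_right hq.ne', sub_eq_zero]
    norm_cast

theorem stmt_1 (n k : ℕ) (hn : 4 ≤ n) (hk : 2 ≤ k) (hk' : k ≤ n / 2) :
    alphaF n k 0 1 ≥ bF n k 0 ∧ (alphaF n k 0 1 = bF n k 0 ↔ n = 2 * k) := by
  obtain ⟨hge_iff, heq_iff⟩ := stmt_1_general n k hk (by omega)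
  exact ⟨hge_iff.mpr (by omega), heq_iff⟩
end

section
/- Let n ≥ 4 and let k be an integer with 2 ≤ k ≤ ⌊n/2⌋. Then there exists a real H₀ > 0 such that for every real H > H₀ one has α(n,k,H,1) < b(n,k,H). -/
/-! Dropping the fraction in `α` and replacing the square root in `b` by the smaller `nH` gives
`α ≤ (n - 1) (1 + H²)` and `n (k - 1) / k + n² (k - 1) / k² · H² ≤ b`. The gap between these two
bounds factors as `(n - k) / k² · ((nk - n - k) H² - k)`, and `k ≤ 2 (nk - n - k)` whenever
`2 ≤ k < n`, so that `H² > 2` makes it positive. -/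

section RealParameters

variable {x y H : ℝ}

-- A concave quadratic in `y` taking the value `x - 2` at both `y = 1` and `y = x - 1`.
lemma alphaF_denom_nonneg (hy : 1 ≤ y) (hyx : y ≤ x - 1) :
    0 ≤ y * (x - 2 * y) + x * (y - 1) * (x - y) := by
  have chord_expansion : y * (x - 2 * y) + x * (y - 1) * (x - y) =
      (x - 2) + (x + 2) * ((y - 1) * (x - 1 - y)) := by ring
  rw [chord_expansion]
  have hprod : 0 ≤ (y - 1) * (x - 1 - y) := mul_nonneg (by linarith) (by linarith)
  exact add_nonneg (by linarith) (mul_nonneg (by linarith) hprod)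

lemma sub_one_mul_one_add_sq_lt (hy : 0 < y) (hyx : y < x) (hH : y < (x * y - x - y) * H ^ 2) :
    (x - 1) * (1 + H ^ 2) < x * (y - 1) / y + x ^ 2 * (y - 1) / y ^ 2 * H ^ 2 := by
  have gap_eq : x * (y - 1) / y + x ^ 2 * (y - 1) / y ^ 2 * H ^ 2 - (x - 1) * (1 + H ^ 2) =
      (x - y) / y ^ 2 * ((x * y - x - y) * H ^ 2 - y) := by
    field_simp
    ring
  rw [← sub_pos, gap_eq]
  exact mul_pos (div_pos (sub_pos.2 hyx) (by positivity)) (sub_pos.2 hH)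

lemma le_two_mul_mul_sub_sub (hy : 2 ≤ y) (hyx : y + 1 ≤ x) : y ≤ 2 * (x * y - x - y) := by
  have value_at_add_one : 0 ≤ (2 * y + 1) * (y - 2) := mul_nonneg (by linarith) (by linarith)
  have monotone_in_x : (y + 1) * (y - 1) ≤ x * (y - 1) :=
    mul_le_mul_of_nonneg_right hyx (by linarith)
  linarith

end RealParameters

section Bounds

variable {n k : ℕ} {H c : ℝ}

lemma alphaF_le (hk : 1 ≤ k) (hkn : k < n) (hc : 0 ≤ c + H ^ 2) :
    alphaF n k H c ≤ ((n : ℝ) - 1) * (c + H ^ 2) := by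
  have hk_real : (1 : ℝ) ≤ k := by exact_mod_cast hk
  have hkn_real : (k : ℝ) + 1 ≤ n := by exact_mod_cast hkn
  refine mul_le_mul_of_nonneg_right (sub_le_self _ (div_nonneg ?_ ?_)) hc
  · exact mul_nonneg (mul_nonneg (by linarith) (by linarith)) (by linarith)
  · exact alphaF_denom_nonneg hk_real (by linarith)

lemma le_bF (hk : 1 ≤ k) (hkn : k ≤ n) (hH : 0 ≤ H) :
    (n : ℝ) * (k - 1) / k + (n : ℝ) ^ 2 * (k - 1) / (k : ℝ) ^ 2 * H ^ 2 ≤ bF n k H := by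
  have hk_sub : (0 : ℝ) ≤ k - 1 := sub_nonneg.2 (by exact_mod_cast hk)
  have hkn_sub : (0 : ℝ) ≤ n - k := sub_nonneg.2 (by exact_mod_cast hkn)
  have le_root : (n : ℝ) * H ≤ √((n : ℝ) ^ 2 * H ^ 2 + 4 * k * (n - k)) := by
    refine Real.le_sqrt_of_sq_le ?_
    rw [mul_pow]
    exact le_add_of_nonneg_right (by positivity)
  calc (n : ℝ) * (k - 1) / k + (n : ℝ) ^ 2 * (k - 1) / (k : ℝ) ^ 2 * H ^ 2
      = n * (k - 1) / k + n * (k - 1) * H / (2 * (k : ℝ) ^ 2) * (n * H + n * H) := by ring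
    _ ≤ bF n k H := by
      unfold bF
      gcongr

end Bounds

theorem stmt_2_general {n k : ℕ} (hk : 2 ≤ k) (hkn : k < n) {H : ℝ} (hH : √2 < H) :
    alphaF n k H 1 < bF n k H := by
  have hk_real : (2 : ℝ) ≤ k := by exact_mod_cast hk
  have hkn_real : (k : ℝ) + 1 ≤ n := by exact_mod_cast hkn
  have hH_sq : 2 < H ^ 2 := Real.lt_sq_of_sqrt_lt hH
  have hcoeff : (k : ℝ) ≤ 2 * (n * k - n - k) := le_two_mul_mul_sub_sub hk_real hkn_real
  have hthreshold : (k : ℝ) < (n * k - n - k) * H ^ 2 :=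
    calc (k : ℝ) ≤ (n * k - n - k) * 2 := by linarith
      _ < (n * k - n - k) * H ^ 2 := mul_lt_mul_of_pos_left hH_sq (by linarith)
  calc alphaF n k H 1
      ≤ ((n : ℝ) - 1) * (1 + H ^ 2) := alphaF_le (by lia) hkn (by positivity)
    _ < (n : ℝ) * (k - 1) / k + (n : ℝ) ^ 2 * (k - 1) / (k : ℝ) ^ 2 * H ^ 2 :=
      sub_one_mul_one_add_sq_lt (by linarith) (by linarith) hthreshold
    _ ≤ bF n k H := le_bF (by lia) hkn.le ((Real.sqrt_nonneg 2).trans hH.le)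

theorem stmt_2 (n k : ℕ) (hn : 4 ≤ n) (hk : 2 ≤ k) (hk' : k ≤ n / 2) :
    ∃ H₀ : ℝ, 0 < H₀ ∧ ∀ H : ℝ, H₀ < H → alphaF n k H 1 < bF n k H := by
  exact ⟨√2, by positivity, fun _ hH => stmt_2_general hk (by lia) hH⟩
end

section
/- Let n ≥ 5 be an integer and define φ : [2, n/2] → ℝ by φ(s) := s(n−s)/(s(n−2s)+n(s−1)(n−s)). Then φ is strictly monotone decreasing on [2, n/2] (that is, if 2 ≤ s < t ≤ n/2 then φ(s) > φ(t)). -/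
noncomputable def phiF (n : ℕ) (s : ℝ) : ℝ :=
  s * ((n : ℝ) - s) / (s * ((n : ℝ) - 2 * s) + (n : ℝ) * (s - 1) * ((n : ℝ) - s))

/-!
The denominator of `φ` depends on `s` only through `u = s (n - s)`: it equals `(n + 2) u - n ^ 2`.
So `φ` is the map `u ↦ u / ((n + 2) u - n ^ 2)`, which decreases where its denominator is positive,
after the parabola `s ↦ s (n - s)`, which increases up to its vertex `n / 2`.
-/

section

variable {K : Type*} [Field K] [LinearOrder K] [IsStrictOrderedRing K]

theorem strictAntiOn_div_mul_sub (b : K) {c : K} (hc : 0 < c) :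
    StrictAntiOn (fun u ↦ u / (b * u - c)) {u | 0 < b * u - c} := by
  intro u hu v hv huv
  have hcuv : c * u < c * v := mul_lt_mul_of_pos_left huv hc
  refine (div_lt_div_iff₀ hv hu).2 ?_
  calc v * (b * u - c) = b * u * v - c * v := by ring
    _ < b * u * v - c * u := sub_lt_sub_left hcuv _
    _ = u * (b * v - c) := by ring

theorem strictMonoOn_mul_sub_self (a : K) :
    StrictMonoOn (fun s ↦ s * (a - s)) (Set.Iic (a / 2)) := by
  intro s _ t ht hst
  have hta : t ≤ a / 2 := ht
  have hpos : 0 < (t - s) * (a - s - t) := mul_pos (by linarith) (by linarith)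
  have hdiff : t * (a - t) - s * (a - s) = (t - s) * (a - s - t) := by ring
  exact sub_pos.1 (hdiff ▸ hpos)

theorem sub_one_le_mul_sub_self {a s : K} (h1 : 1 ≤ s) (hs : s ≤ a - 1) :
    a - 1 ≤ s * (a - s) := by
  have hnonneg : 0 ≤ (s - 1) * (a - 1 - s) := mul_nonneg (by linarith) (by linarith)
  linarith

theorem add_two_mul_sub_sq_pos {a s : K} (ha : 2 < a) (h1 : 1 ≤ s) (hs : s ≤ a - 1) :
    0 < (a + 2) * (s * (a - s)) - a ^ 2 := by
  calc 0 < (a + 2) * (a - 1) - a ^ 2 := by linarith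
    _ ≤ (a + 2) * (s * (a - s)) - a ^ 2 := by
      gcongr
      exact sub_one_le_mul_sub_self h1 hs

theorem stmt_4_general (a : K) :
    StrictAntiOn (fun s ↦ s * (a - s) / (s * (a - 2 * s) + a * (s - 1) * (a - s)))
      (Set.Icc 1 (a / 2)) := by
  intro s hs t ht hst
  have hs1 : 1 ≤ s := hs.1
  have hta : t ≤ a / 2 := ht.2
  have ha : 2 < a := by linarith
  have hdenom (x : K) :
      x * (a - 2 * x) + a * (x - 1) * (a - x) = (a + 2) * (x * (a - x)) - a ^ 2 := by ring
  simp only [hdenom]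
  exact strictAntiOn_div_mul_sub (a + 2) (by positivity)
    (add_two_mul_sub_sq_pos ha hs1 (by linarith))
    (add_two_mul_sub_sq_pos ha ht.1 (by linarith))
    (strictMonoOn_mul_sub_self a hs.2 ht.2 hst)

end

theorem stmt_4 (n : ℕ) (hn : 5 ≤ n) :
    ∀ s t : ℝ, 2 ≤ s → s < t → t ≤ (n : ℝ) / 2 → phiF n t < phiF n s := by
  intro s t hs hst ht
  exact stmt_4_general (n : ℝ) ⟨by linarith, by linarith⟩ ⟨by linarith, ht⟩ hst
end

section
/- Let n ≥ 5 be an integer and let H, c be reals with c + H² > 0. Then the function k ↦ α(n,k,H,c) is strictly monotone increasing for integers 2 ≤ k ≤ ⌊n/2⌋, i.e., if 2 ≤ k < k' ≤ ⌊n/2⌋ are integers then α(n,k,H,c) < α(n,k',H,c). -/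
/-! With `p = k (n - k)`, the denominator in `α` equals `(n + 2) p - n ^ 2`, so `k` enters only
through `p`. The ratio `p / ((n + 2) p - n ^ 2)` decreases in `p` where its denominator is positive,
and `b (n - b) - a (n - a) = (b - a) (n - a - b)` is positive when `a < b` and `a + b < n`. -/

section Alpha

variable {𝕜 : Type*} [Field 𝕜]

/-- The quantity `α(n, k, H, c)` with all parameters, including the dimension `n` and the index `k`,
in a field; `alphaF` is its restriction to natural numbers `n`, `k` over `ℝ`. -/
def alpha (n k H c : 𝕜) : 𝕜 :=
  (n - 1 - k * (n - k) * (n - 2) / (k * (n - 2 * k) + n * (k - 1) * (n - k))) * (c + H ^ 2)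

lemma alpha_eq (n k H c : 𝕜) :
    alpha n k H c =
      (n - 1 - k * (n - k) / ((n + 2) * (k * (n - k)) - n ^ 2) * (n - 2)) * (c + H ^ 2) := by
  have denom_eq : k * (n - 2 * k) + n * (k - 1) * (n - k) = (n + 2) * (k * (n - k)) - n ^ 2 := by
    ring
  rw [alpha, denom_eq, mul_div_right_comm]

variable [LinearOrder 𝕜] [IsStrictOrderedRing 𝕜]

lemma strictAntiOn_div_mul_sub_s5 (m : 𝕜) {r : 𝕜} (hr : 0 < r) :
    StrictAntiOn (fun p ↦ p / (m * p - r)) {p | r < m * p} := by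
  intro p hp q hq hpq
  have cross_lt : q * (m * p - r) < p * (m * q - r) := by
    linear_combination r * hpq
  exact (div_lt_div_iff₀ (sub_pos.2 hq) (sub_pos.2 hp)).2 cross_lt

lemma mul_sub_lt_mul_sub {n a b : 𝕜} (hab : a < b) (hn : a + b < n) :
    a * (n - a) < b * (n - b) := by
  have gap_pos : 0 < (b - a) * (n - (a + b)) := mul_pos (sub_pos.2 hab) (sub_pos.2 hn)
  linear_combination gap_pos

lemma sq_lt_add_two_mul_mul_sub {n k : 𝕜} (hn : 2 < n) (hk : 1 ≤ k) (hkn : k ≤ n - 1) :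
    n ^ 2 < (n + 2) * (k * (n - k)) := by
  have endpoint_le : n - 1 ≤ k * (n - k) := by
    linear_combination mul_nonneg (sub_nonneg.2 hk) (sub_nonneg.2 hkn)
  calc
    n ^ 2 < (n + 2) * (n - 1) := by linear_combination hn
    _ ≤ (n + 2) * (k * (n - k)) := by gcongr

theorem stmt_5_general {n k k' H c : 𝕜} (hpos : 0 < c + H ^ 2) (hk : 1 ≤ k) (hkk' : k < k')
    (hn : k + k' < n) : alpha n k H c < alpha n k' H c := by
  have n_gt_two : 2 < n := by linarith
  have denom_pos : n ^ 2 < (n + 2) * (k * (n - k)) :=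
    sq_lt_add_two_mul_mul_sub n_gt_two hk (by linarith)
  have denom_pos' : n ^ 2 < (n + 2) * (k' * (n - k')) :=
    sq_lt_add_two_mul_mul_sub n_gt_two (hk.trans hkk'.le) (by linarith)
  have ratio_lt := strictAntiOn_div_mul_sub_s5 (n + 2) (by positivity) denom_pos denom_pos'
    (mul_sub_lt_mul_sub hkk' hn)
  rw [alpha_eq, alpha_eq]
  exact mul_lt_mul_of_pos_right
    (sub_lt_sub_left (mul_lt_mul_of_pos_right ratio_lt (sub_pos.2 n_gt_two)) _) hpos

end Alpha

lemma alphaF_eq_alpha (n k : ℕ) (H c : ℝ) : alphaF n k H c = alpha (n : ℝ) k H c :=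
  rfl

theorem stmt_5 (n : ℕ) (hn : 5 ≤ n) (H c : ℝ) (hpos : 0 < c + H ^ 2) :
    ∀ k k' : ℕ, 2 ≤ k → k < k' → k' ≤ n / 2 → alphaF n k H c < alphaF n k' H c := by
  intro k k' hk hkk' hk'
  have sum_lt : k + k' < n := by omega
  rw [alphaF_eq_alpha, alphaF_eq_alpha]
  exact stmt_5_general hpos (by exact_mod_cast one_le_two.trans hk) (by exact_mod_cast hkk')
    (by exact_mod_cast sum_lt)
end

section
/- Fix integers n ≥ 5, m ≥ 1, a real c, symmetric matrices H_1,…,H_m as in the context, and an integer k with 2 ≤ k ≤ ⌊n/2⌋. If Ric − α(n,k,H,c)·I_n is positive semidefinite, then for every integer q with 2 ≤ q ≤ k one has Θ_q ≤ q(n−q)c. -/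
open Finset

noncomputable def cF (n m : ℕ) (A : Fin m → Matrix (Fin n) (Fin n) ℝ) (a : Fin m) : ℝ :=
  (A a).trace / (n : ℝ)

noncomputable def HF (n m : ℕ) (A : Fin m → Matrix (Fin n) (Fin n) ℝ) : ℝ :=
  Real.sqrt (∑ a : Fin m, cF n m A a ^ 2)

noncomputable def RicF (n m : ℕ) (c : ℝ) (A : Fin m → Matrix (Fin n) (Fin n) ℝ) :
    Matrix (Fin n) (Fin n) ℝ :=
  (((n : ℝ) - 1) * c) • (1 : Matrix (Fin n) (Fin n) ℝ) +
    ∑ a : Fin m, (((n : ℝ) * cF n m A a) • A a - A a * A a)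

noncomputable def ThetaF (n m : ℕ) (A : Fin m → Matrix (Fin n) (Fin n) ℝ) (q : ℕ) : ℝ :=
  ∑ i ∈ Finset.univ.filter (fun i : Fin n => (i : ℕ) < q),
    ∑ j ∈ Finset.univ.filter (fun j : Fin n => q ≤ (j : ℕ)),
      (2 * ∑ a : Fin m, (A a i j) ^ 2 - ∑ a : Fin m, A a i i * A a j j)

/-!
Split the index set into a block `S` of size `q` and its complement. Bounding the diagonal squares
of the block by Cauchy–Schwarz, the trace of `Ric` over `S` is controlled by three quantities: the
energy `x` of the off-diagonal block, and `y = ∑ uₐ²`, `z = ∑ cₐ uₐ`, where `uₐ` measures how far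
the trace of `Hₐ` over `S` is from its average value. Passing to the complement keeps `x` and `y`
and flips the sign of `z`, and `Θ_q` is an affine function of `x`, `y`, `z`. The lower bound `α`
on the diagonal of `Ric` therefore gives two linear inequalities, and for `k = q` a nonnegative
combination of them is exactly the claim. The case `q < k` reduces to `k = q`: the trace of `Ric`
forces `c + H² ≥ 0`, and then `α(n, k, H, c)` is increasing in `k`.
-/

section Pinching

/-- The coefficient by which the pinching constant `alphaF` falls short of `n - 1`, as a function
of real `n` and `k`: `alphaF n k H c = (n - 1 - pinchingDefect n k) * (c + H ^ 2)`. -/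
noncomputable def pinchingDefect (n k : ℝ) : ℝ :=
  k * (n - k) * (n - 2) / (k * (n - 2 * k) + n * (k - 1) * (n - k))

lemma alphaF_eq (n k : ℕ) (H c : ℝ) :
    alphaF n k H c = ((n : ℝ) - 1 - pinchingDefect n k) * (c + H ^ 2) :=
  rfl

variable {n q k : ℝ}

lemma pinchingDefect_eq (n k : ℝ) :
    pinchingDefect n k = k * (n - k) * (n - 2) / (k * (n - k) * (n + 2) - n ^ 2) := by
  unfold pinchingDefect
  congr 1
  ring

lemma two_mul_sub_two_le_mul_sub (hq : 2 ≤ q) (hqn : 2 * q ≤ n) : 2 * (n - 2) ≤ q * (n - q) := by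
  nlinarith

lemma pinchingDefect_denom_pos (hk : 2 ≤ k) (hkn : 2 * k ≤ n) :
    0 < k * (n - k) * (n + 2) - n ^ 2 := by
  nlinarith [two_mul_sub_two_le_mul_sub hk hkn]

lemma pinchingDefect_pos (hk : 2 ≤ k) (hkn : 2 * k ≤ n) : 0 < pinchingDefect n k := by
  have hnum : 0 < k * (n - k) * (n - 2) :=
    mul_pos (mul_pos (by linarith) (by linarith)) (by linarith)
  rw [pinchingDefect_eq]
  exact div_pos hnum (pinchingDefect_denom_pos hk hkn)

lemma pinchingDefect_anti (hq : 2 ≤ q) (hqk : q ≤ k) (hkn : 2 * k ≤ n) :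
    pinchingDefect n k ≤ pinchingDefect n q := by
  have hn2 : 0 ≤ n - 2 := by linarith
  have hmul : q * (n - q) ≤ k * (n - k) := by nlinarith
  rw [pinchingDefect_eq, pinchingDefect_eq,
    div_le_div_iff₀ (pinchingDefect_denom_pos (hq.trans hqk) hkn)
      (pinchingDefect_denom_pos hq (by linarith))]
  nlinarith [mul_le_mul_of_nonneg_left hmul (mul_nonneg hn2 (sq_nonneg n))]

lemma exists_block_multipliers (hq : 2 ≤ q) (hqn : 2 * q ≤ n) :
    ∃ u v : ℝ, 0 ≤ u ∧ 0 ≤ v ∧ 2 ≤ u + v ∧ u / q + v / (n - q) = 1 ∧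
      (u - v) * (n - 2) = n - 2 * q ∧ pinchingDefect n q * (u * q + v * (n - q)) = q * (n - q) := by
  have hq0 : 0 < q := by linarith
  have hnq : 0 < n - q := by linarith
  have hn0 : 0 < n := by linarith
  have hn2 : 0 < n - 2 := by linarith
  obtain ⟨d, hd⟩ : ∃ d, d * (n - 2) = n - 2 * q := ⟨(n - 2 * q) / (n - 2), by field_simp⟩
  have hd0 : 0 ≤ d := nonneg_of_mul_nonneg_left (by linarith : 0 ≤ d * (n - 2)) hn2
  have hd1 : d ≤ 1 := le_of_mul_le_mul_right (by linarith : d * (n - 2) ≤ 1 * (n - 2)) hn2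
  -- The solution of `u / q + v / (n - q) = 1`, `u - v = d`.
  refine ⟨q * (n - q + d) / n, (n - q) * (q - d) / n,
    div_nonneg (mul_nonneg hq0.le (by linarith)) hn0.le,
    div_nonneg (mul_nonneg hnq.le (by linarith)) hn0.le, ?_, ?_, ?_, ?_⟩
  · rw [← add_div, le_div_iff₀ hn0]
    nlinarith [two_mul_sub_two_le_mul_sub hq hqn]
  · field_simp
    ring
  · rw [← hd]
    field_simp
    ring
  · have hsum : q * (n - q + d) / n * q + (n - q) * (q - d) / n * (n - q) =
        q * (n - q) - d * (n - 2 * q) := by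
      field_simp
      ring
    rw [hsum, pinchingDefect_eq, div_mul_eq_mul_div,
      div_eq_iff (pinchingDefect_denom_pos hq hqn).ne']
    linear_combination (-(q * (n - q) * (n - 2 * q))) * hd

lemma two_mul_add_sub_le_of_block_inequalities {x y z E : ℝ} (hq : 2 ≤ q) (hqn : 2 * q ≤ n)
    (hx : 0 ≤ x) (hblock : x + y / q - (n - 2) * z ≤ q * (pinchingDefect n q * E))
    (hcompl : x + y / (n - q) + (n - 2) * z ≤ (n - q) * (pinchingDefect n q * E)) :
    2 * x + y - (n - 2 * q) * z ≤ q * (n - q) * E := by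
  obtain ⟨u, v, hu, hv, hx_coeff, hy_coeff, hz_coeff, hE_coeff⟩ := exists_block_multipliers hq hqn
  calc 2 * x + y - (n - 2 * q) * z
      ≤ (u + v) * x + y - (n - 2 * q) * z := by gcongr
    _ = u * (x + y / q - (n - 2) * z) + v * (x + y / (n - q) + (n - 2) * z) := by
        linear_combination z * hz_coeff - y * hy_coeff
    _ ≤ u * (q * (pinchingDefect n q * E)) + v * ((n - q) * (pinchingDefect n q * E)) := by
        gcongr
    _ = q * (n - q) * E := by linear_combination E * hE_coeff

end Pinching

section BlockPartition

lemma sq_sum_diag_div_card_le {ι : Type*} (A : Matrix ι ι ℝ) (S : Finset ι) :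
    (∑ i ∈ S, A i i) ^ 2 / #S ≤ ∑ i ∈ S, ∑ j ∈ S, A i j ^ 2 :=
  calc (∑ i ∈ S, A i i) ^ 2 / #S
      ≤ ∑ i ∈ S, A i i ^ 2 :=
        div_le_of_le_mul₀ (by positivity) (by positivity)
          (sq_sum_le_card_mul_sum_sq.trans_eq (mul_comm _ _))
    _ ≤ ∑ i ∈ S, ∑ j ∈ S, A i j ^ 2 :=
        sum_le_sum fun i hi =>
          single_le_sum (f := fun j => A i j ^ 2) (fun _ _ => sq_nonneg _) hi

variable {ι : Type*} [Fintype ι]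

/-- The average of the diagonal entries of a matrix; it is `0` for the empty matrix. -/
noncomputable def meanDiag (A : Matrix ι ι ℝ) : ℝ :=
  A.trace / Fintype.card ι

/-- The excess of the partial trace of `A` over the block `S` above its average value; the
parameter `u` along which both the Ricci traces and `Θ` of a block are expressed. -/
noncomputable def traceExcess (A : Matrix ι ι ℝ) (S : Finset ι) : ℝ :=
  ∑ i ∈ S, A i i - #S * meanDiag A

lemma card_mul_meanDiag (A : Matrix ι ι ℝ) : Fintype.card ι * meanDiag A = A.trace := by
  cases isEmpty_or_nonempty ι
  · simp [Matrix.trace]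
  · exact mul_div_cancel₀ _ (by simp)

lemma traceExcess_univ (A : Matrix ι ι ℝ) : traceExcess A univ = 0 := by
  rw [traceExcess, card_univ, card_mul_meanDiag]
  exact sub_self _

variable [DecidableEq ι]

/-- The sum of the squared entries of `A` in the off-diagonal block `S × Sᶜ`. -/
def offBlockSq (A : Matrix ι ι ℝ) (S : Finset ι) : ℝ :=
  ∑ i ∈ S, ∑ j ∈ Sᶜ, A i j ^ 2

lemma traceExcess_compl (A : Matrix ι ι ℝ) (S : Finset ι) :
    traceExcess A Sᶜ = -traceExcess A S := by
  have htotal := traceExcess_univ A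
  have hsum := sum_add_sum_compl S fun i => A i i
  have hcard : (#S : ℝ) + #Sᶜ = #(univ : Finset ι) := mod_cast card_add_card_compl S
  unfold traceExcess at *
  linear_combination hsum + htotal - meanDiag A * hcard

lemma sum_diag_compl (A : Matrix ι ι ℝ) (S : Finset ι) :
    ∑ i ∈ Sᶜ, A i i = (Fintype.card ι - #S) * meanDiag A - traceExcess A S := by
  have hcompl := traceExcess_compl A S
  rw [traceExcess, card_compl, Nat.cast_sub S.card_le_univ] at hcompl
  linear_combination hcompl

lemma offBlockSq_nonneg (A : Matrix ι ι ℝ) (S : Finset ι) : 0 ≤ offBlockSq A S :=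
  sum_nonneg fun _ _ => sum_nonneg fun _ _ => sq_nonneg _

variable {A : Matrix ι ι ℝ}

lemma offBlockSq_compl (hA : A.IsSymm) (S : Finset ι) : offBlockSq A Sᶜ = offBlockSq A S := by
  unfold offBlockSq
  rw [compl_compl, sum_comm]
  simp only [hA.apply]

lemma sum_diag_mul_self_eq (hA : A.IsSymm) (S : Finset ι) :
    ∑ i ∈ S, (A * A) i i = ∑ i ∈ S, ∑ j ∈ S, A i j ^ 2 + offBlockSq A S := by
  rw [offBlockSq, ← sum_add_distrib]
  refine sum_congr rfl fun i _ => ?_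
  rw [sum_add_sum_compl, Matrix.mul_apply]
  refine sum_congr rfl fun j _ => ?_
  rw [hA.apply, sq]

lemma sum_diag_trace_smul_sub_mul_self_le (hA : A.IsSymm) {S : Finset ι} (hS : S.Nonempty) :
    ∑ i ∈ S, (A.trace * A i i - (A * A) i i) ≤
      #S * (Fintype.card ι - 1) * meanDiag A ^ 2
        + (Fintype.card ι - 2) * (meanDiag A * traceExcess A S)
        - traceExcess A S ^ 2 / #S - offBlockSq A S := by
  have hcard : (#S : ℝ) ≠ 0 := mod_cast hS.card_pos.ne'
  have hsum : ∑ i ∈ S, A i i = #S * meanDiag A + traceExcess A S := by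
    rw [traceExcess]
    ring
  have hsq := sq_sum_diag_div_card_le A S
  have hexpand : (∑ i ∈ S, A i i) ^ 2 / #S =
      #S * meanDiag A ^ 2 + 2 * (meanDiag A * traceExcess A S) + traceExcess A S ^ 2 / #S := by
    rw [hsum]
    field_simp
    ring
  rw [sum_sub_distrib, ← mul_sum, sum_diag_mul_self_eq hA, hsum, ← card_mul_meanDiag]
  linarith

lemma sum_block_two_mul_sq_sub_diag_mul_diag (A : Matrix ι ι ℝ) (S : Finset ι) :
    ∑ i ∈ S, ∑ j ∈ Sᶜ, (2 * A i j ^ 2 - A i i * A j j) =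
      2 * offBlockSq A S + traceExcess A S ^ 2
        - (Fintype.card ι - 2 * #S) * (meanDiag A * traceExcess A S)
        - #S * (Fintype.card ι - #S) * meanDiag A ^ 2 := by
  simp only [sum_sub_distrib, ← mul_sum, ← sum_mul, sum_diag_compl]
  rw [offBlockSq, traceExcess]
  ring

end BlockPartition

section SecondFundamentalForm

/-- The quantity `Θ` of an arbitrary block `S` of indices in place of the first `q` ones. -/
def blockTheta {ι κ : Type*} [Fintype ι] [DecidableEq ι] [Fintype κ] (A : κ → Matrix ι ι ℝ)
    (S : Finset ι) : ℝ :=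
  ∑ i ∈ S, ∑ j ∈ Sᶜ, (2 * ∑ a, A a i j ^ 2 - ∑ a, A a i i * A a j j)

lemma blockTheta_eq_sum {ι κ : Type*} [Fintype ι] [DecidableEq ι] [Fintype κ]
    (A : κ → Matrix ι ι ℝ) (S : Finset ι) :
    blockTheta A S = ∑ a, ∑ i ∈ S, ∑ j ∈ Sᶜ, (2 * A a i j ^ 2 - A a i i * A a j j) := by
  simp only [blockTheta, mul_sum, ← sum_sub_distrib]
  rw [sum_comm (s := univ)]
  exact sum_congr rfl fun _ _ => sum_comm

lemma le_diag_of_posSemidef_sub_smul_one {ι : Type*} [DecidableEq ι] {M : Matrix ι ι ℝ} {t : ℝ}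
    (h : (M - t • (1 : Matrix ι ι ℝ)).PosSemidef) (i : ι) : t ≤ M i i := by
  simpa using h.diag_nonneg (i := i)

variable {n m : ℕ} {c : ℝ} {A : Fin m → Matrix (Fin n) (Fin n) ℝ}

lemma ThetaF_eq_blockTheta (A : Fin m → Matrix (Fin n) (Fin n) ℝ) (q : ℕ) :
    ThetaF n m A q = blockTheta A {i : Fin n | (i : ℕ) < q} := by
  simp only [ThetaF, blockTheta, compl_filter, not_lt]

lemma cF_eq_meanDiag (A : Fin m → Matrix (Fin n) (Fin n) ℝ) (a : Fin m) :
    cF n m A a = meanDiag (A a) := by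
  rw [cF, meanDiag, Fintype.card_fin]

lemma HF_sq (A : Fin m → Matrix (Fin n) (Fin n) ℝ) :
    HF n m A ^ 2 = ∑ a, meanDiag (A a) ^ 2 := by
  simp only [← cF_eq_meanDiag]
  exact Real.sq_sqrt (sum_nonneg fun _ _ => sq_nonneg _)

lemma RicF_apply_self (c : ℝ) (A : Fin m → Matrix (Fin n) (Fin n) ℝ) (i : Fin n) :
    RicF n m c A i i =
      (n - 1) * c + ∑ a, ((A a).trace * A a i i - (A a * A a) i i) := by
  have htrace (a : Fin m) : n * cF n m A a = (A a).trace := by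
    simpa only [cF_eq_meanDiag, Fintype.card_fin] using card_mul_meanDiag (A a)
  simp [RicF, Matrix.sum_apply, htrace]

lemma sum_RicF_diag_le (hA : ∀ a, (A a).IsSymm) {S : Finset (Fin n)} (hS : S.Nonempty) :
    ∑ i ∈ S, RicF n m c A i i ≤
      #S * ((n - 1) * (c + HF n m A ^ 2))
        + (n - 2) * ∑ a, meanDiag (A a) * traceExcess (A a) S
        - (∑ a, traceExcess (A a) S ^ 2) / #S - ∑ a, offBlockSq (A a) S := by
  have hblock := sum_le_sum fun a (_ : a ∈ univ) => sum_diag_trace_smul_sub_mul_self_le (hA a) hS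
  simp only [sum_sub_distrib, sum_add_distrib, ← mul_sum, ← sum_div, Fintype.card_fin,
    ← HF_sq] at hblock
  simp only [RicF_apply_self, sum_add_distrib, sum_sub_distrib, sum_const, nsmul_eq_mul]
  rw [sum_comm (s := S), sum_comm (s := S)]
  simp only [← mul_sum]
  linarith

lemma blockTheta_eq (A : Fin m → Matrix (Fin n) (Fin n) ℝ) (S : Finset (Fin n)) :
    blockTheta A S =
      2 * ∑ a, offBlockSq (A a) S + ∑ a, traceExcess (A a) S ^ 2
        - (n - 2 * #S) * ∑ a, meanDiag (A a) * traceExcess (A a) S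
        - #S * (n - #S) * HF n m A ^ 2 := by
  rw [blockTheta_eq_sum]
  simp only [sum_block_two_mul_sq_sub_diag_mul_diag]
  simp only [sum_sub_distrib, sum_add_distrib, ← mul_sum, Fintype.card_fin, HF_sq]

lemma le_of_forall_le_RicF_diag (hn : 0 < n) (hA : ∀ a, (A a).IsSymm) {t : ℝ}
    (hRic : ∀ i, t ≤ RicF n m c A i i) : t ≤ (n - 1) * (c + HF n m A ^ 2) := by
  have : NeZero n := ⟨hn.ne'⟩
  have hlower := card_nsmul_le_sum univ _ t fun i _ => hRic i
  have hupper := sum_RicF_diag_le (c := c) hA univ_nonempty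
  simp only [traceExcess_univ, offBlockSq, compl_univ, sum_empty, sum_const_zero, card_univ,
    Fintype.card_fin, nsmul_eq_mul, mul_zero, zero_pow two_ne_zero, zero_div, add_zero,
    sub_zero] at hlower hupper
  exact le_of_mul_le_mul_left (hlower.trans hupper) (by exact_mod_cast hn)

lemma alphaF_le_alphaF {q k : ℕ} {H : ℝ} (hq : 2 ≤ q) (hqk : q ≤ k) (hkn : 2 * k ≤ n)
    (hcH : 0 ≤ c + H ^ 2) : alphaF n q H c ≤ alphaF n k H c := by
  rw [alphaF_eq, alphaF_eq]
  gcongr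
  exact pinchingDefect_anti (mod_cast hq) (mod_cast hqk) (mod_cast hkn)

lemma add_HF_sq_nonneg_of_alphaF_le {k : ℕ} (hk : 2 ≤ k) (hkn : 2 * k ≤ n)
    (hA : ∀ a, (A a).IsSymm) (hRic : ∀ i, alphaF n k (HF n m A) c ≤ RicF n m c A i i) :
    0 ≤ c + HF n m A ^ 2 := by
  have hle := le_of_forall_le_RicF_diag (by omega) hA hRic
  rw [alphaF_eq] at hle
  have hpos : 0 < pinchingDefect n k := pinchingDefect_pos (mod_cast hk) (mod_cast hkn)
  exact nonneg_of_mul_nonneg_right (by linarith) hpos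

lemma block_inequality_of_alphaF_le {k : ℕ} (hA : ∀ a, (A a).IsSymm)
    (hRic : ∀ i, alphaF n k (HF n m A) c ≤ RicF n m c A i i)
    {S : Finset (Fin n)} (hS : S.Nonempty) :
    ∑ a, offBlockSq (A a) S + (∑ a, traceExcess (A a) S ^ 2) / #S
        - (n - 2) * ∑ a, meanDiag (A a) * traceExcess (A a) S ≤
      #S * (pinchingDefect n k * (c + HF n m A ^ 2)) := by
  have hlower := card_nsmul_le_sum S _ _ fun i _ => hRic i
  have hupper := sum_RicF_diag_le (c := c) hA hS
  rw [nsmul_eq_mul, alphaF_eq] at hlower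
  linarith

lemma blockTheta_le_of_alphaF_card_le {S : Finset (Fin n)} (hS : 2 ≤ #S) (hSn : 2 * #S ≤ n)
    (hA : ∀ a, (A a).IsSymm) (hRic : ∀ i, alphaF n #S (HF n m A) c ≤ RicF n m c A i i) :
    blockTheta A S ≤ #S * (n - #S) * c := by
  have hcard : #Sᶜ = n - #S := by rw [card_compl, Fintype.card_fin]
  have hcard_real : (#Sᶜ : ℝ) = n - #S := by rw [hcard, Nat.cast_sub (by omega)]
  have hblock := block_inequality_of_alphaF_le hA hRic (card_pos.1 (by omega : 0 < #S))
  have hcompl := block_inequality_of_alphaF_le hA hRic (card_pos.1 (by omega : 0 < #Sᶜ))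
  simp only [offBlockSq_compl (hA _), traceExcess_compl, neg_sq, mul_neg, sum_neg_distrib,
    sub_neg_eq_add, hcard_real] at hcompl
  have hcombined := two_mul_add_sub_le_of_block_inequalities (mod_cast hS) (mod_cast hSn)
    (sum_nonneg fun a _ => offBlockSq_nonneg (A a) S) hblock hcompl
  rw [blockTheta_eq]
  linarith

theorem stmt_10_general {k : ℕ} {S : Finset (Fin n)} (hA : ∀ a, (A a).IsSymm)
    (hS : 2 ≤ #S) (hSk : #S ≤ k) (hkn : 2 * k ≤ n)
    (hRic : ∀ i, alphaF n k (HF n m A) c ≤ RicF n m c A i i) :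
    blockTheta A S ≤ #S * (n - #S) * c := by
  have hcH := add_HF_sq_nonneg_of_alphaF_le (hS.trans hSk) hkn hA hRic
  exact blockTheta_le_of_alphaF_card_le hS (by omega) hA fun i =>
    (alphaF_le_alphaF hS hSk hkn hcH).trans (hRic i)

end SecondFundamentalForm

theorem stmt_10 (n m : ℕ) (hn : 5 ≤ n) (hm : 1 ≤ m) (c : ℝ)
    (A : Fin m → Matrix (Fin n) (Fin n) ℝ) (hA : ∀ a : Fin m, (A a).IsSymm)
    (k : ℕ) (hk : 2 ≤ k) (hk' : k ≤ n / 2)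
    (hRic : (RicF n m c A -
        alphaF n k (HF n m A) c • (1 : Matrix (Fin n) (Fin n) ℝ)).PosSemidef) :
    ∀ q : ℕ, 2 ≤ q → q ≤ k →
      ThetaF n m A q ≤ (q : ℝ) * ((n : ℝ) - (q : ℝ)) * c := by
  intro q hq hqk
  have hcard : #{i : Fin n | (i : ℕ) < q} = q := by
    rw [Fin.card_filter_val_lt]
    omega
  simpa only [hcard, ← ThetaF_eq_blockTheta] using
    stmt_10_general hA (hq.trans_eq hcard.symm) (hcard.trans_le hqk) (by omega)
      (le_diag_of_posSemidef_sub_smul_one hRic)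
end
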